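/- arXiv:2005.14046 — 2 statements merged into one kernel-verified Lean document; each statement's English description precedes it below -/
import Mathlib

section
/- Let n ≥ 2 and q ∈ (1,∞). For every x ∈ Bⁿ, ∫_{S^{n−1}} P_h(x,ζ)^q dσ(ζ) = (1−|x|²)^{−(n−1)(q−1)} · ∫_{S^{n−1}} |x−η|^{2(n−1)(q−1)} dσ(η), where P_h(x,ζ) = ((1−|x|²)/|x−ζ|²)^{n−1}. -/
open MeasureTheory Real

noncomputable def hyp (a b c x : ℝ) : ℝ :=
  ∑' k : ℕ, ((ascPochhammer ℝ k).eval a * (ascPochhammer ℝ k).eval b /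
    ((k.factorial : ℝ) * (ascPochhammer ℝ k).eval c)) * x ^ k


noncomputable def sphereσ (n : ℕ) : Measure (EuclideanSpace ℝ (Fin n)) :=
  (((μH[(n : ℝ) - 1]).restrict (Metric.sphere 0 1)) Set.univ)⁻¹ •
    (μH[(n : ℝ) - 1]).restrict (Metric.sphere 0 1)

open scoped NNReal ENNReal

lemma conf_aux {X : Type*} [MetricSpace X] [MeasurableSpace X] [BorelSpace X] (d : ℝ) (hd : 0 ≤ d)
    (S : Set X) (hS : MeasurableSet S) (T : X → X) (hT : Measurable T) (hTS : ∀ y ∈ S, T y ∈ S)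
    (hTT : ∀ y ∈ S, T (T y) = y) (h : X → ℝ≥0) (hm : Measurable h) (hh : ∀ y ∈ S, h y ≠ 0)
    (hdist : ∀ y ∈ S, ∀ z ∈ S, nndist (T y) (T z) ^ 2 ≤ h y * h z * nndist y z ^ 2) :
    ((μH[d]).restrict S).map T ≤ ((μH[d]).restrict S).withDensity (fun y => (h y : ℝ≥0∞) ^ d) := by
  have hf : Measurable (fun y => (h y : ℝ≥0∞)) := hm.coe_nnreal_ennreal
  refine Measure.le_intro fun E hE _ => ?_
  have key : ∀ t : ℝ≥0, 1 < t → ((μH[d]).restrict S).map T E ≤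
      (t : ℝ≥0∞) ^ d * ((μH[d]).restrict S).withDensity (fun y => (h y : ℝ≥0∞) ^ d) E := by
    intro t ht
    have ht0 : t ≠ 0 := (zero_lt_one.trans ht).ne'
    rw [measure_eq_measure_preimage_add_measure_tsum_Ico_zpow _ hf hE ht,
      measure_eq_measure_preimage_add_measure_tsum_Ico_zpow
        (((μH[d]).restrict S).withDensity (fun y => (h y : ℝ≥0∞) ^ d)) hf hE ht]
    have z1 : ((μH[d]).restrict S).map T (E ∩ (fun y => (h y : ℝ≥0∞)) ⁻¹' {0}) = 0 := by
      have hms : MeasurableSet (E ∩ (fun y => (h y : ℝ≥0∞)) ⁻¹' {0}) :=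
        hE.inter (hf (measurableSet_singleton _))
      rw [Measure.map_apply hT hms, Measure.restrict_apply (hT hms)]
      convert measure_empty (μ := (μH[d] : Measure X))
      ext y
      simp only [Set.mem_inter_iff, Set.mem_preimage, Set.mem_singleton_iff,
        ENNReal.coe_eq_zero, Set.mem_empty_iff_false, iff_false]
      rintro ⟨⟨_, h1⟩, h2⟩
      exact hh _ (hTS y h2) h1
    have z2 : (fun y => (h y : ℝ≥0∞)) ⁻¹' {⊤} = ∅ := by
      ext y; simp
    rw [z1, z2, Set.inter_empty, measure_empty, measure_empty, zero_add, zero_add, add_zero,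
      mul_add, ← ENNReal.tsum_mul_left]
    refine le_trans (ENNReal.tsum_le_tsum fun k => ?_) le_add_self
    have hA : MeasurableSet (E ∩ (fun y => (h y : ℝ≥0∞)) ⁻¹' Set.Ico ((t : ℝ≥0∞) ^ k) ((t : ℝ≥0∞) ^ (k + 1))) :=
      hE.inter (hf measurableSet_Ico)
    set A := E ∩ (fun y => (h y : ℝ≥0∞)) ⁻¹' Set.Ico ((t : ℝ≥0∞) ^ k) ((t : ℝ≥0∞) ^ (k + 1)) with hAdef
    rw [Measure.map_apply hT hA, Measure.restrict_apply (hT hA), withDensity_apply _ hA,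
      Measure.restrict_restrict hA]
    have hsub : T ⁻¹' A ∩ S ⊆ T '' (A ∩ S) := fun y hy => ⟨T y, ⟨hy.1, hTS y hy.2⟩, hTT y hy.2⟩
    have hlip : LipschitzOnWith (t ^ (k + 1)) T (A ∩ S) := by
      rw [lipschitzOnWith_iff_dist_le_mul]
      intro y hy z hz
      have hy1 : h y ≤ t ^ (k + 1) := by
        have := hy.1.2.2.le
        rw [← ENNReal.coe_zpow ht0] at this
        exact ENNReal.coe_le_coe.mp this
      have hz1 : h z ≤ t ^ (k + 1) := by
        have := hz.1.2.2.le
        rw [← ENNReal.coe_zpow ht0] at this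
        exact ENNReal.coe_le_coe.mp this
      have : nndist (T y) (T z) ≤ t ^ (k + 1) * nndist y z := by
        rw [← pow_le_pow_iff_left₀ (zero_le) (zero_le) two_ne_zero]
        refine (hdist y hy.2 z hz.2).trans ?_
        rw [mul_pow, pow_two (t ^ (k + 1))]
        gcongr
      exact_mod_cast this
    calc μH[d] (T ⁻¹' A ∩ S) ≤ μH[d] (T '' (A ∩ S)) := measure_mono hsub
      _ ≤ ((t ^ (k + 1) : ℝ≥0) : ℝ≥0∞) ^ d * μH[d] (A ∩ S) := hlip.hausdorffMeasure_image_le hd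
      _ = (t : ℝ≥0∞) ^ d * (((t : ℝ≥0∞) ^ k) ^ d * μH[d] (A ∩ S)) := by
        rw [← mul_assoc, ← ENNReal.mul_rpow_of_nonneg _ _ hd, zpow_add_one₀ ht0, ENNReal.coe_mul,
          ENNReal.coe_zpow ht0, mul_comm (t : ℝ≥0∞)]
      _ ≤ _ := by
        gcongr
        rw [← setLIntegral_const]
        exact setLIntegral_mono' (hA.inter hS) fun y hy => ENNReal.rpow_le_rpow hy.1.2.1 hd
  set a := ((μH[d]).restrict S).withDensity (fun y => (h y : ℝ≥0∞) ^ d) E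
  have hlim : Filter.Tendsto (fun t : ℝ≥0 => (t : ℝ≥0∞) ^ d * a) (nhdsWithin 1 (Set.Ioi 1))
      (nhds (((1 : ℝ≥0) : ℝ≥0∞) ^ d * a)) := by
    refine Filter.Tendsto.mono_left ?_ nhdsWithin_le_nhds
    refine ENNReal.Tendsto.mul_const ?_ (Or.inl (by simp))
    exact (ENNReal.continuous_rpow_const.comp ENNReal.continuous_coe).tendsto _
  have := ge_of_tendsto hlim (Filter.eventually_of_mem self_mem_nhdsWithin fun t ht => key t ht)
  simpa using this

lemma conf_lint {X : Type*} [MetricSpace X] [MeasurableSpace X] [BorelSpace X] (d : ℝ) (hd : 0 ≤ d)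
    (S : Set X) (hS : MeasurableSet S) (T : X → X) (hT : Measurable T) (hTS : ∀ y ∈ S, T y ∈ S)
    (hTT : ∀ y ∈ S, T (T y) = y) (h : X → ℝ≥0) (hm : Measurable h)
    (hh : ∀ y ∈ S, h (T y) * h y = 1)
    (hdist : ∀ y ∈ S, ∀ z ∈ S, nndist (T y) (T z) ^ 2 ≤ h y * h z * nndist y z ^ 2)
    (F : X → ℝ≥0∞) (hF : Measurable F) :
    ∫⁻ y in S, F y ∂μH[d] = ∫⁻ y in S, F (T y) * (h y : ℝ≥0∞) ^ d ∂μH[d] := by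
  have hle := conf_aux d hd S hS T hT hTS hTT h hm
    (fun y hy h0 => by have := hh y hy; simp [h0] at this) hdist
  have hg : Measurable (fun y => (h y : ℝ≥0∞) ^ d) := hm.coe_nnreal_ennreal.pow_const d
  have main : ∀ G : X → ℝ≥0∞, Measurable G →
      ∫⁻ y in S, G (T y) ∂μH[d] ≤ ∫⁻ y in S, (h y : ℝ≥0∞) ^ d * G y ∂μH[d] := by
    intro G hG
    rw [← lintegral_map hG hT]
    refine (lintegral_mono' hle le_rfl).trans_eq ?_
    rw [lintegral_withDensity_eq_lintegral_mul _ hg hG]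
    rfl
  apply le_antisymm
  · calc ∫⁻ y in S, F y ∂μH[d] = ∫⁻ y in S, F (T (T y)) ∂μH[d] :=
          setLIntegral_congr_fun hS fun y hy => by simp only [hTT y hy]
      _ ≤ ∫⁻ y in S, (h y : ℝ≥0∞) ^ d * F (T y) ∂μH[d] := main (fun y => F (T y)) (hF.comp hT)
      _ = _ := by simp only [mul_comm]
  · calc ∫⁻ y in S, F (T y) * (h y : ℝ≥0∞) ^ d ∂μH[d]
        = ∫⁻ y in S, F (T y) * (h (T (T y)) : ℝ≥0∞) ^ d ∂μH[d] :=
          setLIntegral_congr_fun hS fun y hy => by simp only [hTT y hy]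
      _ ≤ ∫⁻ y in S, (h y : ℝ≥0∞) ^ d * (F y * (h (T y) : ℝ≥0∞) ^ d) ∂μH[d] :=
          main (fun y => F y * (h (T y) : ℝ≥0∞) ^ d) (hF.mul (hg.comp hT))
      _ = _ := setLIntegral_congr_fun hS fun y hy => by
          have h1 : (h (T y) : ℝ≥0∞) ^ d * (h y : ℝ≥0∞) ^ d = 1 := by
            rw [← ENNReal.mul_rpow_of_nonneg _ _ hd, ← ENNReal.coe_mul, hh y hy]; simp
          calc (h y : ℝ≥0∞) ^ d * (F y * (h (T y) : ℝ≥0∞) ^ d)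
              = F y * ((h (T y) : ℝ≥0∞) ^ d * (h y : ℝ≥0∞) ^ d) := by ring
            _ = F y := by rw [h1, mul_one]

theorem poisson_szego_power_integral (n : ℕ) (hn : 2 ≤ n) (q : ℝ) (hq : 1 < q)
    (x : EuclideanSpace ℝ (Fin n)) (hx : ‖x‖ < 1) :
    ∫ ζ, (((1 - ‖x‖ ^ 2) / ‖x - ζ‖ ^ 2) ^ (n - 1) : ℝ) ^ q ∂(sphereσ n) =
      (1 - ‖x‖ ^ 2) ^ (-((n : ℝ) - 1) * (q - 1)) *
        ∫ η, ‖x - η‖ ^ (2 * ((n : ℝ) - 1) * (q - 1)) ∂(sphereσ n) := by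
  set d : ℝ := (n : ℝ) - 1 with hd
  have hd0 : 0 ≤ d := by
    have : (2 : ℝ) ≤ n := by exact_mod_cast hn
    linarith
  have hdn : ((n - 1 : ℕ) : ℝ) = d := by
    rw [Nat.cast_sub (by omega)]; simp [hd]
  set r : ℝ := 1 - ‖x‖ ^ 2 with hr
  have hr0 : 0 < r := by nlinarith [norm_nonneg x]
  let T : EuclideanSpace ℝ (Fin n) → EuclideanSpace ℝ (Fin n) :=
    fun η => x - (r / ‖x - η‖ ^ 2) • (η - x)
  let h : EuclideanSpace ℝ (Fin n) → ℝ≥0 := fun η => (r / ‖x - η‖ ^ 2).toNNReal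
  have hhc : ∀ η, (h η : ℝ) = r / ‖x - η‖ ^ 2 := fun η => Real.coe_toNNReal _ (by positivity)
  have hpos : ∀ η ∈ Metric.sphere (0 : EuclideanSpace ℝ (Fin n)) 1, 0 < ‖x - η‖ := by
    intro η hη
    rw [norm_pos_iff, sub_ne_zero]
    rintro rfl
    simp at hη
    linarith
  have hxT : ∀ η, ‖x - T η‖ = r / ‖x - η‖ := by
    intro η
    have : x - T η = (r / ‖x - η‖ ^ 2) • (η - x) := by simp [T]
    rw [this, norm_smul, Real.norm_of_nonneg (by positivity), norm_sub_rev η x]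
    by_cases h0 : ‖x - η‖ = 0
    · simp [h0]
    · field_simp
  have hT : Measurable T := by fun_prop
  have hm : Measurable h := by fun_prop
  have hTS : ∀ η ∈ Metric.sphere (0 : EuclideanSpace ℝ (Fin n)) 1,
      T η ∈ Metric.sphere (0 : EuclideanSpace ℝ (Fin n)) 1 := by
    intro η hη
    have hp := hpos η hη
    rw [mem_sphere_zero_iff_norm] at hη ⊢
    have e1 : ‖η‖ ^ 2 = ‖x‖ ^ 2 - 2 * inner ℝ x (x - η) + ‖x - η‖ ^ 2 := by
      rw [← norm_sub_sq_real]; simp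
    have e2 : T η = x + (r / ‖x - η‖ ^ 2) • (x - η) := by
      simp only [T]; rw [← neg_sub x η, smul_neg, sub_neg_eq_add]
    have e3 : ‖T η‖ ^ 2 = 1 := by
      rw [e2, norm_add_sq_real, inner_smul_right, norm_smul, mul_pow,
        Real.norm_of_nonneg (by positivity)]
      have e4 : inner ℝ x (x - η) = (‖x‖ ^ 2 + ‖x - η‖ ^ 2 - 1) / 2 := by
        rw [hη] at e1; linarith
      rw [e4]
      have : ‖x‖ ^ 2 = 1 - r := by rw [hr]; ring
      rw [this]
      field_simp
      ring
    nlinarith [norm_nonneg (T η)]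
  have hTT : ∀ η ∈ Metric.sphere (0 : EuclideanSpace ℝ (Fin n)) 1, T (T η) = η := by
    intro η hη
    have hp := hpos η hη
    have e : T (T η) = x - (r / ‖x - T η‖ ^ 2) • (T η - x) := rfl
    rw [e, hxT]
    have e' : T η - x = (-(r / ‖x - η‖ ^ 2)) • (η - x) := by simp [T]
    rw [e', smul_smul]
    have : r / (r / ‖x - η‖) ^ 2 * -(r / ‖x - η‖ ^ 2) = -1 := by
      field_simp
    rw [this]; simp
  have hh : ∀ η ∈ Metric.sphere (0 : EuclideanSpace ℝ (Fin n)) 1, h (T η) * h η = 1 := by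
    intro η hη
    have hp := hpos η hη
    apply NNReal.coe_injective
    rw [NNReal.coe_mul, hhc, hhc, hxT, NNReal.coe_one]
    field_simp
  have hdist : ∀ y ∈ Metric.sphere (0 : EuclideanSpace ℝ (Fin n)) 1,
      ∀ z ∈ Metric.sphere (0 : EuclideanSpace ℝ (Fin n)) 1,
      nndist (T y) (T z) ^ 2 ≤ h y * h z * nndist y z ^ 2 := by
    intro y hy z hz
    have hpy := hpos y hy
    have hpz := hpos z hz
    apply le_of_eq
    apply NNReal.coe_injective
    push_cast
    rw [hhc, hhc, dist_eq_norm, dist_eq_norm]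
    have e1 : T y - T z = (r / ‖x - y‖ ^ 2) • (x - y) - (r / ‖x - z‖ ^ 2) • (x - z) := by
      simp only [T]
      rw [← neg_sub x y, ← neg_sub x z, smul_neg, smul_neg]; abel
    have e2 : y - z = (x - z) - (x - y) := by abel
    rw [e1, e2]
    generalize x - y = u at hpy ⊢
    generalize x - z = v at hpz ⊢
    rw [norm_sub_sq_real, norm_sub_sq_real, inner_smul_left, inner_smul_right,
      norm_smul, norm_smul, Real.norm_of_nonneg (by positivity), Real.norm_of_nonneg (by positivity),
      real_inner_comm u v]
    simp only [conj_trivial]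
    field_simp
  have hSm : MeasurableSet (Metric.sphere (0 : EuclideanSpace ℝ (Fin n)) 1) :=
    Metric.isClosed_sphere.measurableSet
  have key := conf_lint d hd0 _ hSm T hT hTS hTT h hm hh hdist
    (fun ζ => ENNReal.ofReal (((r / ‖x - ζ‖ ^ 2) ^ (n - 1) : ℝ) ^ q)) (by fun_prop)
  rw [sphereσ, integral_smul_measure, integral_smul_measure, mul_smul_comm]
  congr 1
  rw [← integral_const_mul, integral_eq_lintegral_of_nonneg_ae
      (Filter.Eventually.of_forall fun ζ => by positivity) (Measurable.aestronglyMeasurable (by fun_prop)),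
    integral_eq_lintegral_of_nonneg_ae
      (Filter.Eventually.of_forall fun ζ => by positivity) (Measurable.aestronglyMeasurable (by fun_prop)), key]
  congr 1
  refine setLIntegral_congr_fun hSm fun η hη => ?_
  have hp := hpos η hη
  rw [hxT, show (h η : ℝ≥0∞) = ENNReal.ofReal (r / ‖x - η‖ ^ 2) from rfl,
    ENNReal.ofReal_rpow_of_nonneg (by positivity) hd0, ← ENNReal.ofReal_mul (by positivity)]
  congr 1
  have e1 : r / (r / ‖x - η‖) ^ 2 = r⁻¹ * ‖x - η‖ ^ 2 := by field_simp
  have e2 : r / ‖x - η‖ ^ 2 = (r⁻¹ * ‖x - η‖ ^ 2)⁻¹ := by field_simp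
  rw [e1, e2, ← Real.rpow_natCast (r⁻¹ * ‖x - η‖ ^ 2), hdn, ← Real.rpow_mul (by positivity),
    ← Real.rpow_neg_eq_inv_rpow, ← Real.rpow_add (by positivity),
    show d * q + -d = d * (q - 1) by ring, Real.mul_rpow (by positivity) (by positivity),
    ← Real.rpow_neg_eq_inv_rpow, ← Real.rpow_natCast ‖x - η‖ 2, ← Real.rpow_mul (by positivity)]
  congr 2
  · ring
  · push_cast; ring
end

section
/- Suppose 2b is neither zero nor a negative integer, |x| < 1, and |4x/(1+x)²| < 1. Then ₂F₁(a, b; 2b; 4x/(1+x)²) = (1+x)^{2a} · ₂F₁(a, a − b + 1/2; b + 1/2; x²). -/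
open MeasureTheory Real

open Filter Topology
lemma hyp_uniq (a b : ℝ) (k e : ℝ) (hb : ∀ k : ℕ, 2 * b ≠ -(k : ℝ)) (D : ℝ → ℝ)
    (hD : AnalyticAt ℝ D 0) (h0 : D 0 = 0)
    (hode : ∀ᶠ x in 𝓝 (0:ℝ), x * (1 - x ^ 2) * deriv (deriv D) x
      + (2 * b - k * x ^ 2) * deriv D x - e * x * D x = 0) :
    ∀ᶠ x in 𝓝 (0:ℝ), D x = 0 := by
  by_contra hne
  obtain ⟨n, g, hg, hg0, hgD⟩ := hD.exists_eventuallyEq_pow_smul_nonzero_iff.2 hne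
  simp only [sub_zero, smul_eq_mul] at hgD
  rcases n with _ | m
  · have := hgD.self_of_nhds
    simp [h0] at this
    exact hg0 this.symm
  set h : ℝ → ℝ := fun x => (m + 1) * g x + x * deriv g x with hh
  have hhan : AnalyticAt ℝ h 0 := by
    have := hg.deriv
    fun_prop
  have e1 : deriv D =ᶠ[𝓝 0] fun x => x ^ m * h x := by
    have h1 : D =ᶠ[𝓝 0] fun x => x ^ (m+1) * g x := hgD
    filter_upwards [h1.deriv, hg.eventually_analyticAt] with x hx hgx
    rw [hx]
    have := ((hasDerivAt_id x).pow (m+1)).mul hgx.differentiableAt.hasDerivAt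
    have h2 := this.deriv
    simp only [id] at h2
    refine Eq.trans (Eq.trans ?_ h2) ?_
    · rfl
    · simp [hh]; ring
  have e2 : ∀ᶠ x in 𝓝 (0:ℝ), x * deriv (deriv D) x = x ^ m * (m * h x + x * deriv h x) := by
    filter_upwards [e1.deriv, hhan.eventually_analyticAt] with x hx hgx
    rw [hx]
    have := ((hasDerivAt_id x).pow m).mul hgx.differentiableAt.hasDerivAt
    have h2 := this.deriv
    simp only [id] at h2
    have h3 : deriv (fun x => x ^ m * h x) x = _ := h2
    rw [h3]
    rcases m with _ | m
    · simp
    · simp; ring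
  set B : ℝ → ℝ := fun x => (1 - x^2) * (m * h x + x * deriv h x) + (2 * b - k * x ^ 2) * h x
    - e * x ^ 2 * g x with hB
  have hBc : ContinuousAt B 0 := by
    have h1 := hg.continuousAt
    have h2 := hhan.continuousAt
    have h3 := hhan.deriv.continuousAt
    fun_prop
  have hB0 : ∀ᶠ x in 𝓝[≠] (0:ℝ), B x = 0 := by
    filter_upwards [nhdsWithin_le_nhds hode, nhdsWithin_le_nhds e1, nhdsWithin_le_nhds e2,
      nhdsWithin_le_nhds hgD, self_mem_nhdsWithin] with x o1 o2 o3 o4 hx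
    have : x ^ m * B x = 0 := by
      rw [o2, o4] at o1
      rw [hB]
      linear_combination o1 - (1 - x^2) * o3
    exact (mul_eq_zero.1 this).resolve_left (pow_ne_zero _ hx)
  have hB1 : B 0 = 0 := by
    have t1 : Tendsto B (𝓝[≠] 0) (𝓝 (B 0)) := hBc.tendsto.mono_left nhdsWithin_le_nhds
    have t2 : Tendsto B (𝓝[≠] 0) (𝓝 0) :=
      tendsto_const_nhds.congr' (hB0.mono fun x hx => hx.symm)
    exact tendsto_nhds_unique t1 t2
  have : (m + 2 * b) * ((m + 1) * g 0) = 0 := by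
    have h9 : B 0 = (m + 2 * b) * ((m + 1) * g 0) := by simp [hB, hh]; ring
    rw [← h9, hB1]
  rcases mul_eq_zero.1 this with h1 | h1
  · exact hb m (by linarith)
  · rcases mul_eq_zero.1 h1 with h1 | h1
    · have : (0:ℝ) ≤ m := m.cast_nonneg
      linarith
    · exact hg0 h1

lemma hyp_deriv_series {f : ℝ → ℝ} {p : FormalMultilinearSeries ℝ ℝ ℝ}
    (hf : HasFPowerSeriesOnBall f p 0 1) :
    ∃ q : FormalMultilinearSeries ℝ ℝ ℝ, HasFPowerSeriesOnBall (deriv f) q 0 1 ∧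
      ∀ n, q.coeff n = (n + 1) * p.coeff (n + 1) := by
  have h1 := hf.fderiv
  have h2 := (ContinuousLinearMap.apply ℝ ℝ (1:ℝ)).comp_hasFPowerSeriesOnBall h1
  refine ⟨_, h2, fun n => ?_⟩
  · have := p.derivSeries_coeff_one n
    rw [nsmul_eq_mul] at this
    push_cast at this
    exact this

lemma hyp_hasSum {f : ℝ → ℝ} {p : FormalMultilinearSeries ℝ ℝ ℝ}
    (hf : HasFPowerSeriesOnBall f p 0 1) {z : ℝ} (hz : |z| < 1) :
    HasSum (fun n => p.coeff n * z ^ n) (f z) := by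
  have := hf.hasSum (y := z) (by simpa [enorm_eq_nnnorm, ← NNReal.coe_lt_coe] using hz)
  simpa [mul_comm] using this

lemma hyp_ode {f : ℝ → ℝ} {p : FormalMultilinearSeries ℝ ℝ ℝ} (a b c : ℝ)
    (hf : HasFPowerSeriesOnBall f p 0 1)
    (hp : ∀ n : ℕ, (n + 1) * (c + n) * p.coeff (n + 1) = (a + n) * (b + n) * p.coeff n)
    {z : ℝ} (hz : |z| < 1) :
    z * (1 - z) * deriv (deriv f) z + (c - (a + b + 1) * z) * deriv f z - a * b * f z = 0 := by
  obtain ⟨q, hq, hqc⟩ := hyp_deriv_series hf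
  obtain ⟨r, hr, hrc⟩ := hyp_deriv_series hq
  have s0 := hyp_hasSum hf hz
  have s1 := hyp_hasSum hq hz
  have s2 := hyp_hasSum hr hz
  have s1z : HasSum (fun n : ℕ => n * p.coeff n * z ^ n) (z * deriv f z) := by
    have := (hasSum_nat_add_iff (f := fun n : ℕ => n * p.coeff n * z ^ n) 1
      (g := z * deriv f z)).1
    simp at this
    apply this
    refine (s1.mul_left z).congr_fun ?_ |> id
    intro n
    rw [hqc]; ring
  have s2z : HasSum (fun n : ℕ => n * ((n + 1) * p.coeff (n + 1)) * z ^ n)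
      (z * deriv (deriv f) z) := by
    have := (hasSum_nat_add_iff (f := fun n : ℕ => n * ((n + 1) * p.coeff (n + 1)) * z ^ n) 1
      (g := z * deriv (deriv f) z)).1
    simp at this
    apply this
    refine (s2.mul_left z).congr_fun ?_ |> id
    intro n
    rw [hrc, hqc]; push_cast; ring
  have s2zz : HasSum (fun n : ℕ => n * (n - 1) * p.coeff n * z ^ n)
      (z * (z * deriv (deriv f) z)) := by
    have := (hasSum_nat_add_iff (f := fun n : ℕ => n * (n - 1) * p.coeff n * z ^ n) 1
      (g := z * (z * deriv (deriv f) z))).1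
    simp at this
    apply this
    refine (s2z.mul_left z).congr_fun ?_ |> id
    intro n
    ring
  have key := (((s2z.sub s2zz).add (s1.mul_left c)).sub (s1z.mul_left (a + b + 1))).sub
    (s0.mul_left (a * b))
  have : HasSum (fun _ : ℕ => (0:ℝ)) _ := key.congr_fun (fun n => by
    rw [hqc]
    linear_combination (-z ^ n) * hp n) |> id
  have := this.unique hasSum_zero
  linear_combination this

open Polynomial in
lemma hyp_series (a b c : ℝ) (hc : ∀ k : ℕ, c ≠ -(k : ℝ)) :
    ∃ p : FormalMultilinearSeries ℝ ℝ ℝ, HasFPowerSeriesOnBall (hyp a b c) p 0 1 ∧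
    ∀ n : ℕ, (n + 1) * (c + n) * p.coeff (n + 1) = (a + n) * (b + n) * p.coeff n := by
  refine ⟨ordinaryHypergeometricSeries ℝ a b c, ?_, fun n => ?_⟩
  · have hr : 1 ≤ (ordinaryHypergeometricSeries ℝ a b c).radius := by
      by_cases h : ∀ kn : ℕ, (kn:ℝ) ≠ -a ∧ ↑kn ≠ -b ∧ ↑kn ≠ -c
      · rw [ordinaryHypergeometricSeries_radius_eq_one ℝ a b c h]
      · push Not at h
        obtain ⟨k, hk⟩ := h
        by_cases h1 : (k:ℝ) = -a
        · obtain rfl : a = -k := by linarith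
          rw [ordinaryHypergeometric_radius_top_of_neg_nat₁]; simp
        · by_cases h2 : (k:ℝ) = -b
          · obtain rfl : b = -k := by linarith
            rw [ordinaryHypergeometric_radius_top_of_neg_nat₂]; simp
          · have := hk h1 h2
            exact absurd (by linarith) (hc k)
    have h1 := ((ordinaryHypergeometricSeries ℝ a b c).hasFPowerSeriesOnBall
      (lt_of_lt_of_le one_pos hr)).mono one_pos hr
    have h2 : hyp a b c = (ordinaryHypergeometricSeries ℝ a b c).sum := by
      funext x
      rw [ordinaryHypergeometric_sum_eq, hyp]
      refine tsum_congr fun k => ?_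
      simp only [smul_eq_mul, div_eq_mul_inv, mul_inv]
      ring
    rwa [h2]
  · have hcc : ∀ n : ℕ, (ascPochhammer ℝ n).eval c ≠ 0 := fun n h => by
      obtain ⟨k, -, hk⟩ := (ascPochhammer_eval_eq_zero_iff _ _).1 h
      exact hc k (by linarith)
    have h1 := hcc n
    have h2 := hcc (n + 1)
    simp only [ordinaryHypergeometricSeries, FormalMultilinearSeries.coeff_ofScalars,
      ordinaryHypergeometricCoefficient]
    rw [ascPochhammer_succ_eval] at h2
    have h3 : c + n ≠ 0 := right_ne_zero_of_mul h2
    have h4 : (n.factorial : ℝ) ≠ 0 := by positivity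
    have h5 : (n : ℝ) + 1 ≠ 0 := by positivity
    simp only [ascPochhammer_succ_eval, Nat.factorial_succ]
    push_cast
    field_simp

lemma hyp_zero (a b c : ℝ) : hyp a b c 0 = 1 := by
  rw [hyp, tsum_eq_single 0]
  · simp
  · intro n hn; simp [hn]

open Filter Topology
theorem hyp_quadratic_transform (a b x : ℝ) (hb : ∀ k : ℕ, 2 * b ≠ -(k : ℝ))
    (hx : |x| < 1) (hx' : |4 * x / (1 + x) ^ 2| < 1) :
    hyp a b (2 * b) (4 * x / (1 + x) ^ 2) =
      (1 + x) ^ (2 * a) * hyp a (a - b + 1 / 2) (b + 1 / 2) (x ^ 2) := by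
  obtain ⟨p, hp, hpc⟩ := hyp_series a b (2 * b) hb
  obtain ⟨q, hq, hqc⟩ := hyp_series a (a - b + 1 / 2) (b + 1 / 2) (fun k hk =>
    hb (2 * k + 1) (by push_cast; linarith))
  set P := hyp a b (2 * b) with hP
  set Q := hyp a (a - b + 1 / 2) (b + 1 / 2) with hQ
  have hP0 : P 0 = 1 := hyp_zero _ _ _
  have hQ0 : Q 0 = 1 := hyp_zero _ _ _
  have Pan : ∀ z, |z| < 1 → AnalyticAt ℝ P z := fun z hz =>
    hp.analyticAt_of_mem (by simpa [enorm_eq_nnnorm, ← NNReal.coe_lt_coe] using hz)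
  have Qan : ∀ z, |z| < 1 → AnalyticAt ℝ Q z := fun z hz =>
    hq.analyticAt_of_mem (by simpa [enorm_eq_nnnorm, ← NNReal.coe_lt_coe] using hz)
  have Pode := fun z (hz : |z| < 1) => hyp_ode a b (2 * b) hp hpc hz
  have Qode := fun z (hz : |z| < 1) => hyp_ode a (a - b + 1 / 2) (b + 1 / 2) hq hqc hz
  set I : Set ℝ := {y | -1 < y ∧ y < 1 ∧ 0 < y ^ 2 + 6 * y + 1} with hI
  have Iopen : IsOpen I := by
    have c1 : IsOpen {y : ℝ | -1 < y} := isOpen_lt (by fun_prop) (by fun_prop)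
    have c2 : IsOpen {y : ℝ | y < 1} := isOpen_lt (by fun_prop) (by fun_prop)
    have c3 : IsOpen {y : ℝ | 0 < y ^ 2 + 6 * y + 1} := isOpen_lt (by fun_prop) (by fun_prop)
    exact c1.inter (c2.inter c3)
  have I0 : (0:ℝ) ∈ I := by simp [hI]
  have Ipre : IsPreconnected I := by
    have : I.OrdConnected := by
      refine ⟨fun u hu w hw v hv => ?_⟩
      obtain ⟨hu1, hu2, hu3⟩ := hu
      obtain ⟨hw1, hw2, hw3⟩ := hw
      obtain ⟨hv1, hv2⟩ := hv
      refine ⟨by linarith, by linarith, ?_⟩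
      nlinarith
    exact this.isPreconnected
  have Iz : ∀ y ∈ I, |4 * y / (1 + y) ^ 2| < 1 := by
    rintro y ⟨h1, h2, h3⟩
    have : 0 < (1 + y) ^ 2 := by have : 0 < 1 + y := by linarith
                                 positivity
    rw [abs_lt, lt_div_iff₀ this, div_lt_iff₀ this]
    constructor
    · nlinarith
    · nlinarith [mul_pos (sub_pos.2 h2) (sub_pos.2 h2)]
  have Isq : ∀ y ∈ I, |y ^ 2| < 1 := by
    rintro y ⟨h1, h2, h3⟩
    rw [abs_lt]
    constructor <;> nlinarith
  have hxI : x ∈ I := by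
    rw [abs_lt] at hx
    refine ⟨hx.1, hx.2, ?_⟩
    have : 0 < (1 + x) ^ 2 := by have : 0 < 1 + x := by linarith
                                 positivity
    rw [abs_lt, lt_div_iff₀ this, div_lt_iff₀ this] at hx'
    nlinarith [hx'.1]
  set D : ℝ → ℝ := fun y => (1 + y) ^ (-2 * a) * P (4 * y / (1 + y) ^ 2) - Q (y ^ 2) with hDdef
  have Dan : AnalyticOnNhd ℝ D I := by
    intro y hy
    have hy1 : 0 < 1 + y := by linarith [hy.1]
    have a1 : AnalyticAt ℝ (fun y : ℝ => (1 + y) ^ (-2 * a)) y := by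
      have : AnalyticAt ℝ (fun y : ℝ => 1 + y) y := by fun_prop
      have h2 : AnalyticAt ℝ (fun y : ℝ => Real.exp (Real.log (1 + y) * (-2 * a))) y :=
        ((this.log hy1).mul analyticAt_const).rexp
      refine h2.congr ?_
      filter_upwards [Iopen.mem_nhds hy] with t ht
      have ht1 : 0 < 1 + t := by linarith [ht.1]
      rw [Real.rpow_def_of_pos ht1]
    have a2 : AnalyticAt ℝ (fun y : ℝ => 4 * y / (1 + y) ^ 2) y := by
      have : (1 + y) ^ 2 ≠ 0 := by positivity
      fun_prop (disch := assumption)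
    have a3 : AnalyticAt ℝ (fun y : ℝ => P (4 * y / (1 + y) ^ 2)) y :=
      AnalyticAt.fun_comp (Pan _ (Iz y hy)) a2
    have a4 : AnalyticAt ℝ (fun y : ℝ => y ^ 2) y := by fun_prop
    have a5 : AnalyticAt ℝ (fun y : ℝ => Q (y ^ 2)) y :=
      AnalyticAt.fun_comp (Qan _ (Isq y hy)) a4
    exact (a1.mul a3).sub a5
  have D0 : D 0 = 0 := by simp [hDdef, hP0, hQ0]
  have dw : ∀ y ∈ I, HasDerivAt (fun y : ℝ => (1 + y) ^ (-2 * a))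
      (-2 * a / (1 + y) * (1 + y) ^ (-2 * a)) y := by
    intro y hy
    have hy1 : 0 < 1 + y := by linarith [hy.1]
    have := ((hasDerivAt_id' y).const_add 1).rpow_const (p := -2 * a) (Or.inl hy1.ne')
    refine this.congr_deriv ?_
    rw [Real.rpow_sub_one hy1.ne']
    ring
  have dz : ∀ y ∈ I, HasDerivAt (fun y : ℝ => 4 * y / (1 + y) ^ 2)
      (4 * (1 - y) / (1 + y) ^ 3) y := by
    intro y hy
    have hy1 : 1 + y ≠ 0 := by linarith [hy.1]
    have := ((hasDerivAt_id' y).const_mul 4).div (((hasDerivAt_id' y).const_add 1).pow 2)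
      (pow_ne_zero 2 hy1)
    refine this.congr_deriv ?_
    field_simp
    norm_num
    ring
  have dzz : ∀ y ∈ I, HasDerivAt (fun y : ℝ => 4 * (1 - y) / (1 + y) ^ 3)
      (8 * (y - 2) / (1 + y) ^ 4) y := by
    intro y hy
    have hy1 : 1 + y ≠ 0 := by linarith [hy.1]
    have := (((hasDerivAt_id' y).const_sub 1).const_mul 4).div
      (((hasDerivAt_id' y).const_add 1).pow 3) (pow_ne_zero 3 hy1)
    refine this.congr_deriv ?_
    field_simp
    norm_num
    ring
  have du : ∀ y ∈ I, HasDerivAt (fun y : ℝ => -2 * a / (1 + y))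
      (2 * a / (1 + y) ^ 2) y := by
    intro y hy
    have hy1 : 1 + y ≠ 0 := by linarith [hy.1]
    have := (hasDerivAt_const y (-2 * a)).div ((hasDerivAt_id' y).const_add 1) hy1
    refine this.congr_deriv ?_
    field_simp
    norm_num
  have dsq : ∀ y : ℝ, HasDerivAt (fun y : ℝ => y ^ 2) (2 * y) y := by
    intro y
    simpa using hasDerivAt_pow 2 y
  have d1 : ∀ y ∈ I, HasDerivAt D ((1 + y) ^ (-2 * a) * (-2 * a / (1 + y) * P (4 * y / (1 + y) ^ 2)
      + 4 * (1 - y) / (1 + y) ^ 3 * deriv P (4 * y / (1 + y) ^ 2)) - 2 * y * deriv Q (y ^ 2)) y := by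
    intro y hy
    have p1 := (Pan _ (Iz y hy)).differentiableAt.hasDerivAt.comp (h := fun y : ℝ => 4 * y / (1 + y) ^ 2) y (dz y hy)
    have q1 := (Qan _ (Isq y hy)).differentiableAt.hasDerivAt.comp (h := fun y : ℝ => y ^ 2) y (dsq y)
    have := ((dw y hy).mul p1).sub q1
    refine this.congr_deriv ?_
    simp only [Function.comp]
    ring
  have d1e : ∀ y ∈ I, deriv D =ᶠ[𝓝 y] fun y => ((1 + y) ^ (-2 * a) *
      (-2 * a / (1 + y) * P (4 * y / (1 + y) ^ 2)
      + 4 * (1 - y) / (1 + y) ^ 3 * deriv P (4 * y / (1 + y) ^ 2)) - 2 * y * deriv Q (y ^ 2)) := by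
    intro y hy
    filter_upwards [Iopen.mem_nhds hy] with t ht
    exact (d1 t ht).deriv
  have d2 : ∀ y ∈ I, deriv (deriv D) y = (1 + y) ^ (-2 * a) * (-2 * a / (1 + y) *
      (-2 * a / (1 + y) * P (4 * y / (1 + y) ^ 2)
      + 4 * (1 - y) / (1 + y) ^ 3 * deriv P (4 * y / (1 + y) ^ 2))
      + 2 * a / (1 + y) ^ 2 * P (4 * y / (1 + y) ^ 2)
      + -2 * a / (1 + y) * (4 * (1 - y) / (1 + y) ^ 3 * deriv P (4 * y / (1 + y) ^ 2))
      + 8 * (y - 2) / (1 + y) ^ 4 * deriv P (4 * y / (1 + y) ^ 2)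
      + (4 * (1 - y) / (1 + y) ^ 3) ^ 2 * deriv (deriv P) (4 * y / (1 + y) ^ 2))
      - 2 * deriv Q (y ^ 2) - 4 * y ^ 2 * deriv (deriv Q) (y ^ 2) := by
    intro y hy
    rw [(d1e y hy).deriv_eq]
    have p1 := (Pan _ (Iz y hy)).differentiableAt.hasDerivAt.comp (h := fun y : ℝ => 4 * y / (1 + y) ^ 2) y (dz y hy)
    have p2 := (Pan _ (Iz y hy)).deriv.differentiableAt.hasDerivAt.comp (h := fun y : ℝ => 4 * y / (1 + y) ^ 2) y (dz y hy)
    have q2 := (Qan _ (Isq y hy)).deriv.differentiableAt.hasDerivAt.comp (h := fun y : ℝ => y ^ 2) y (dsq y)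
    have := ((dw y hy).mul (((du y hy).mul p1).add ((dzz y hy).mul p2))).sub
      (((hasDerivAt_id' y).const_mul 2).mul q2)
    refine HasDerivAt.deriv ?_
    refine this.congr_deriv ?_
    simp only [Function.comp, Pi.add_apply, Pi.mul_apply]
    ring
  have hode : ∀ y ∈ I, y * (1 - y ^ 2) * deriv (deriv D) y
      + (2 * b - (4 * a - 2 * b + 2) * y ^ 2) * deriv D y
      - (4 * a * (a - b + 1 / 2)) * y * D y = 0 := by
    intro y hy
    have hy1 : 1 + y ≠ 0 := by linarith [hy.1]
    have o1 := Pode _ (Iz y hy)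
    have o2 := Qode _ (Isq y hy)
    rw [d2 y hy, (d1 y hy).deriv, hDdef]
    simp only
    generalize deriv (deriv P) (4 * y / (1 + y) ^ 2) = P2 at *
    generalize deriv P (4 * y / (1 + y) ^ 2) = P1 at *
    generalize P (4 * y / (1 + y) ^ 2) = P0 at *
    generalize deriv (deriv Q) (y ^ 2) = Q2 at *
    generalize deriv Q (y ^ 2) = Q1 at *
    generalize Q (y ^ 2) = Q0 at *
    generalize (1 + y) ^ (-2 * a) = w at *
    linear_combination (norm := (field_simp; ring)) (4 * (1 - y) / (1 + y) * w) * o1 - 4 * y * o2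
  have hev := hyp_uniq a b _ _ hb D (Dan 0 I0) D0
    (by filter_upwards [Iopen.mem_nhds I0] with y hy using hode y hy)
  have hfin := Dan.eqOn_zero_of_preconnected_of_eventuallyEq_zero Ipre I0 hev hxI
  have hx1 : 0 < 1 + x := by linarith [hxI.1]
  have h1 : (1 + x) ^ (2 * a) * (1 + x) ^ (-2 * a) = 1 := by
    rw [← Real.rpow_add hx1]; simp
  simp only [hDdef, Pi.zero_apply] at hfin
  linear_combination (1 + x) ^ (2 * a) * hfin - P (4 * x / (1 + x) ^ 2) * h1
end
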